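/- Let a=(a_1,…,a_n)∈ℤ^n with each a_i≠0, a_1<0, a_i>0 for i>1 (i.e. k=1), and gcd(a_1,…,a_n)=1. If a_1 divides Σ_{j=2}^n a_j, then Hilb_a(1/t) = (−1)^{n−1} t^{n − (Σ_{j=1}^n a_j)/a_1} Hilb_a(t); consequently the invariant ring ℂ[ℂ^n]^{ℂ^×_a} is Gorenstein with a-invariant (Σ_{j=1}^n a_j)/a_1 − n. -/

import Mathlib

/-!
Write `a₁ = -m`, with positive weights `c₁, …, c_k`. An invariant monomial is determined by its
exponents `ν` at the positive weights, subject to `m ∣ ∑ cⱼ νⱼ`, and has degree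
`w(ν) = ∑ νⱼ + (∑ cⱼ νⱼ) / m`. Division with remainder `ν = m s + r`, `0 ≤ rⱼ < m`, gives
`Hilb(t) = N(t) / D(t)` with `N = ∑_r t^{w(r)}` and `D = ∏ⱼ (1 - t^{m + cⱼ})` (`HilbL_eq`).

Put `A = ∑ⱼ (m + cⱼ)` and `∑ cⱼ = m e`. Then `t^A D(1/t) = (-1)^k D(t)`. Since `m ∣ ∑ cⱼ`, the
map `r ↦ m - 1 - r` is an involution of the residue vectors occurring in `N`, and
`w(m - 1 - r) + w(r) + (k + e) = A`, so `t^A N(1/t) = t^{k + e} N(t)`; the quotient of these two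
identities is the functional equation. For an arbitrary representation `p / q` it is transported
through `p D = N q`, as a polynomial identity between reversals (`reverse_identity`). Comparing
degrees in that identity, where `p` and `q` vanish to the same order at `0` because
`N(0), D(0) ≠ 0`, gives `deg p - deg q = -(k + e)`.
-/

open scoped BigOperators

/-- The Hilbert series of the `ℂ^×`-invariants for the weight list `L`, at real `t`. -/
noncomputable def HilbL (L : List ℤ) (t : ℝ) : ℂ :=
  ∑' μ : Fin L.length → ℕ,
    if (∑ i, L.get i * (μ i : ℤ)) = 0 then (t : ℂ) ^ (∑ i, μ i) else 0

open Polynomial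

/-! ### The Hilbert series as an explicit rational function -/

/-- Residue vectors `r ∈ {0,…,m-1}^k` with `m ∣ ∑ cⱼ rⱼ`. -/
abbrev Residues {k : ℕ} (m : ℕ) (c : Fin k → ℕ) : Type :=
  {r : Fin k → Fin m // m ∣ ∑ j, c j * (r j : ℕ)}

/-- The degree `∑ rⱼ + (∑ cⱼ rⱼ) / m` of the invariant monomial whose exponents at the
positive weights are `r`. -/
def resWeight {k m : ℕ} (c : Fin k → ℕ) (r : Residues m c) : ℕ :=
  ∑ j, (r.1 j : ℕ) + (∑ j, c j * (r.1 j : ℕ)) / m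

/-- Numerator of the Hilbert series over the denominator `hilbDen`. -/
noncomputable def hilbNum {k : ℕ} (m : ℕ) (c : Fin k → ℕ) : ℂ[X] :=
  ∑ r : Residues m c, X ^ resWeight c r

/-- The denominator `∏ⱼ (1 - X^(m + cⱼ))` of the Hilbert series. -/
noncomputable def hilbDen {k : ℕ} (m : ℕ) (c : Fin k → ℕ) : ℂ[X] :=
  ∏ j, (1 - X ^ (m + c j))

theorem hasSum_pi_geometric {k : ℕ} (x : Fin k → ℂ) (hx : ∀ j, ‖x j‖ < 1) :
    Summable (fun s : Fin k → ℕ => ‖∏ j, x j ^ s j‖) ∧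
    HasSum (fun s : Fin k → ℕ => ∏ j, x j ^ s j) (∏ j, (1 - x j)⁻¹) := by
  induction k with
  | zero => exact ⟨(hasSum_fintype _).summable, by simp⟩
  | succ k ih =>
    obtain ⟨h1, h2⟩ := ih (fun j => x j.succ) (fun j => hx _)
    have g1 : Summable (fun s : ℕ => ‖x 0 ^ s‖) := by
      simpa [norm_pow] using summable_geometric_of_lt_one (norm_nonneg _) (hx 0)
    have g2 := hasSum_geometric_of_norm_lt_one (hx 0)
    have hs := g1.mul_norm h1
    have hsm := summable_mul_of_summable_norm (f := fun s : ℕ => x 0 ^ s)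
      (g := fun s : Fin k → ℕ => ∏ j, x (Fin.succ j) ^ s j) g1 h1
    have hp := HasSum.mul g2 h2 hsm
    have e : ∀ y : ℕ × (Fin k → ℕ), ∏ j, x j ^ (Fin.consEquiv (fun _ => ℕ) y) j
        = x 0 ^ y.1 * ∏ j, x (Fin.succ j) ^ y.2 j := by
      intro y
      simp [Fin.prod_univ_succ, Fin.consEquiv]
    refine ⟨?_, ?_⟩
    · rw [← (Fin.consEquiv (fun _ => ℕ)).summable_iff]
      refine hs.congr fun y => ?_
      simp only [Function.comp, e]
    · rw [← (Fin.consEquiv (fun _ => ℕ)).hasSum_iff, Fin.prod_univ_succ]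
      refine hp.congr_fun ?_
      intro y
      simp only [Function.comp, e]

/-- The exponent vector of the invariant monomial with exponents `m * s + r` at the positive
weights, for `(s, r) = y`; the entry at `0`, for the weight `-m`, is forced by invariance. -/
def expoMap {k m : ℕ} (c : Fin k → ℕ) (y : (Fin k → ℕ) × Residues m c) : Fin (k + 1) → ℕ :=
  Fin.cons (∑ j, c j * y.1 j + (∑ j, c j * (y.2.1 j : ℕ)) / m)
    (fun j => m * y.1 j + (y.2.1 j : ℕ))

theorem expoMap_injective {k m : ℕ} (c : Fin k → ℕ) :
    Function.Injective (expoMap (m := m) c) := by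
  rintro ⟨s, r, hr⟩ ⟨s', r', hr'⟩ h
  have h' : ∀ j, m * s j + (r j : ℕ) = m * s' j + (r' j : ℕ) := fun j => by
    simpa [expoMap] using congrFun h j.succ
  have hm : ∀ j, 0 < m := fun j => (r j).pos
  have h1 : s = s' := by
    funext j
    have := congrArg (· / m) (h' j)
    simpa [Nat.mul_add_div (hm j), Nat.div_eq_of_lt (r j).2, Nat.div_eq_of_lt (r' j).2] using this
  have h2 : r = r' := by
    funext j
    have := h' j
    rw [h1] at this
    exact Fin.ext (by omega)
  subst h1 h2
  rfl

theorem exists_expoMap {k m : ℕ} (hm : 0 < m) (c : Fin k → ℕ) (μ : Fin (k + 1) → ℕ)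
    (h : m * μ 0 = ∑ j, c j * μ j.succ) : ∃ y, expoMap (m := m) c y = μ := by
  have key : ∑ j, c j * μ j.succ
      = m * ∑ j, c j * (μ j.succ / m) + ∑ j, c j * (μ j.succ % m) := by
    rw [Finset.mul_sum, ← Finset.sum_add_distrib]
    refine Finset.sum_congr rfl fun j _ => ?_
    conv_lhs => rw [← Nat.div_add_mod (μ j.succ) m]
    ring
  have hd : m ∣ ∑ j, c j * (μ j.succ % m) :=
    (Nat.dvd_add_right (dvd_mul_right m _)).1 (key ▸ h ▸ dvd_mul_right m _)
  refine ⟨⟨fun j => μ j.succ / m, fun j => ⟨μ j.succ % m, Nat.mod_lt _ hm⟩, hd⟩, ?_⟩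
  funext i
  refine Fin.cases ?_ (fun j => ?_) i
  · obtain ⟨d, hd⟩ := hd
    simp only [expoMap, Fin.cons_zero, hd, Nat.mul_div_cancel_left _ hm]
    rw [key, hd, ← mul_add] at h
    exact (Nat.eq_of_mul_eq_mul_left hm h).symm
  · simp [expoMap, Nat.div_add_mod]

theorem expoMap_balanced {k m : ℕ} (c : Fin k → ℕ) (y : (Fin k → ℕ) × Residues m c) :
    m * expoMap c y 0 = ∑ j, c j * expoMap c y j.succ := by
  simp only [expoMap, Fin.cons_zero, Fin.cons_succ, mul_add, Finset.sum_add_distrib,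
    Nat.mul_div_cancel' y.2.2, Finset.mul_sum]
  congr 1
  exact Finset.sum_congr rfl fun j _ => by ring

theorem expoMap_sum {k m : ℕ} (c : Fin k → ℕ) (y : (Fin k → ℕ) × Residues m c) :
    ∑ i, expoMap c y i = ∑ j, (m + c j) * y.1 j + resWeight c y.2 := by
  simp only [expoMap, Fin.sum_univ_succ, Fin.cons_zero, Fin.cons_succ, add_mul,
    Finset.sum_add_distrib, resWeight]
  ring

theorem eval_hilbDen_ne_zero {k m : ℕ} (hm : 0 < m) (c : Fin k → ℕ) (x : ℂ) (hx : ‖x‖ < 1) :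
    (hilbDen m c).eval x ≠ 0 := by
  simp only [hilbDen, eval_prod, Finset.prod_ne_zero_iff]
  intro j _ h
  simp only [eval_sub, eval_one, eval_pow, eval_X, sub_eq_zero] at h
  have := pow_lt_one₀ (norm_nonneg x) hx (n := m + c j) (by omega)
  rw [← norm_pow, ← h, norm_one] at this
  exact lt_irrefl _ this

/-- The Hilbert series is `N / D`: every invariant monomial is `expoMap c (s, r)` for a unique
`(s, r)`, and the sum over `s` is a product of geometric series. -/
theorem hasSum_hilb {k m : ℕ} (hm : 0 < m) (c : Fin k → ℕ) (x : ℂ) (hx : ‖x‖ < 1) :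
    HasSum (fun μ : Fin (k + 1) → ℕ =>
        if m * μ 0 = ∑ j, c j * μ j.succ then x ^ ∑ i, μ i else 0)
      ((hilbNum m c).eval x / (hilbDen m c).eval x) := by
  rw [← (expoMap_injective c).hasSum_iff]
  swap
  · intro μ hμ
    refine if_neg fun h => hμ ?_
    exact exists_expoMap hm c μ h
  obtain ⟨g1, g2⟩ := hasSum_pi_geometric (fun j => x ^ (m + c j)) (fun j => by
    rw [norm_pow]; exact pow_lt_one₀ (norm_nonneg x) hx (by omega))
  have f2 := hasSum_fintype (fun r : Residues m c => x ^ resWeight c r)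
  have f1 := (hasSum_fintype (fun r : Residues m c => ‖x ^ resWeight c r‖)).summable
  have hsm := summable_mul_of_summable_norm
    (f := fun s : Fin k → ℕ => ∏ j, (x ^ (m + c j)) ^ s j)
    (g := fun r : Residues m c => x ^ resWeight c r) g1 f1
  have := HasSum.mul g2 f2 hsm
  have hval : (hilbNum m c).eval x / (hilbDen m c).eval x
      = (∏ j, (1 - x ^ (m + c j))⁻¹) * ∑ r : Residues m c, x ^ resWeight c r := by
    simp [hilbNum, hilbDen, eval_finsetSum, eval_prod, div_eq_mul_inv, mul_comm]
  rw [hval]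
  refine this.congr_fun fun y => ?_
  simp only [Function.comp, expoMap_balanced, if_true, expoMap_sum, pow_add x (∑ j, _),
    ← pow_mul, Finset.prod_pow_eq_pow_sum]

theorem HilbL_eq {m : ℕ} (hm : 0 < m) (b : List ℤ) (c : Fin b.length → ℕ)
    (hc : ∀ j, b.get j = c j) (t : ℝ) (h0 : 0 < t) (h1 : t < 1) :
    HilbL (-(m : ℤ) :: b) t = (hilbNum m c).eval (t : ℂ) / (hilbDen m c).eval (t : ℂ) := by
  rw [← (hasSum_hilb hm c (t : ℂ) (by simpa [abs_of_pos h0] using h1)).tsum_eq]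
  refine tsum_congr fun μ => ?_
  refine if_congr ?_ rfl rfl
  change (∑ i : Fin (b.length + 1), (-(m : ℤ) :: b).get i * (μ i : ℤ)) = 0 ↔ _
  rw [Fin.sum_univ_succ]
  have : ∀ j : Fin b.length, (-(m : ℤ) :: b).get j.succ = c j := fun j => hc j
  simp only [this]
  change -(m : ℤ) * (μ 0 : ℤ) + _ = 0 ↔ _
  rw [← Nat.cast_inj (R := ℤ)]
  push_cast
  constructor <;> intro h <;> linarith

/-! ### Reciprocity for the numerator and denominator -/

/-- The involution `r ↦ m - 1 - r` on residue vectors, defined because `m ∣ ∑ cⱼ`. -/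
def revRes {k m : ℕ} (c : Fin k → ℕ) (hd : m ∣ ∑ j, c j) (r : Residues m c) : Residues m c :=
  ⟨fun j => (r.1 j).rev, by
    have h : ∑ j, c j * ((r.1 j).rev : ℕ) + (∑ j, c j + ∑ j, c j * (r.1 j : ℕ))
        = m * ∑ j, c j := by
      rw [← Finset.sum_add_distrib, ← Finset.sum_add_distrib, Finset.mul_sum]
      refine Finset.sum_congr rfl fun j _ => ?_
      have : ((r.1 j).rev : ℕ) + 1 + r.1 j = m := by
        have := (r.1 j).2
        rw [Fin.val_rev]; omega
      calc _ = c j * (((r.1 j).rev : ℕ) + 1 + r.1 j) := by ring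
        _ = _ := by rw [this, mul_comm]
    exact (Nat.dvd_add_left (dvd_add hd r.2)).1 (h ▸ dvd_mul_right m _)⟩

theorem revRes_involutive {k m : ℕ} (c : Fin k → ℕ) (hd : m ∣ ∑ j, c j) :
    Function.Involutive (revRes c hd) := by
  intro r
  apply Subtype.ext
  funext j
  simp [revRes]

theorem resWeight_revRes {k m : ℕ} (hm : 0 < m) (c : Fin k → ℕ) (e : ℕ)
    (he : ∑ j, c j = m * e) (r : Residues m c) :
    resWeight c (revRes c ⟨e, he⟩ r) + resWeight c r + (k + e) = ∑ j, (m + c j) := by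
  have hr : ∀ j, ((r.1 j).rev : ℕ) + 1 + r.1 j = m := fun j => by
    have := (r.1 j).2
    rw [Fin.val_rev]; omega
  obtain ⟨d, hd⟩ := r.2
  obtain ⟨d', hd'⟩ := (revRes c ⟨e, he⟩ r).2
  have h1 : ∑ j, ((r.1 j).rev : ℕ) + k + ∑ j, (r.1 j : ℕ) = k * m := by
    have : ∑ j, (((r.1 j).rev : ℕ) + 1 + r.1 j) = ∑ j : Fin k, m :=
      Finset.sum_congr rfl fun j _ => hr j
    simpa [Finset.sum_add_distrib] using this
  have h2 : m * (d' + e + d) = m * (m * e) := by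
    rw [mul_add, mul_add, ← hd, ← hd', ← he, Finset.mul_sum, ← Finset.sum_add_distrib,
      ← Finset.sum_add_distrib]
    refine Finset.sum_congr rfl fun j _ => ?_
    calc _ = c j * (((r.1 j).rev : ℕ) + 1 + r.1 j) := by simp only [revRes]; ring
      _ = _ := by rw [hr, mul_comm]
  have h3 := Nat.eq_of_mul_eq_mul_left hm h2
  simp only [resWeight, hd, hd', Nat.mul_div_cancel_left _ hm, Finset.sum_add_distrib, he]
  simp only [revRes, Finset.sum_const, Finset.card_univ, Fintype.card_fin, smul_eq_mul]
  omega

theorem hilbNum_inv {k m : ℕ} (hm : 0 < m) (c : Fin k → ℕ) (e : ℕ)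
    (he : ∑ j, c j = m * e) (z : ℂ) (hz : z ≠ 0) :
    z ^ (∑ j, (m + c j)) * (hilbNum m c).eval z⁻¹ = z ^ (k + e) * (hilbNum m c).eval z := by
  simp only [hilbNum, eval_finsetSum, eval_pow, eval_X, Finset.mul_sum]
  refine Fintype.sum_equiv (revRes_involutive c ⟨e, he⟩).toPerm _ _ fun r => ?_
  rw [← resWeight_revRes hm c e he r, Function.Involutive.coe_toPerm, inv_pow]
  field_simp
  ring

theorem hilbDen_inv {k m : ℕ} (c : Fin k → ℕ) (z : ℂ) (hz : z ≠ 0) :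
    z ^ (∑ j, (m + c j)) * (hilbDen m c).eval z⁻¹ = (-1) ^ k * (hilbDen m c).eval z := by
  have : (-1 : ℂ) ^ k = ∏ _j : Fin k, (-1 : ℂ) := by simp
  rw [this]
  simp only [hilbDen, eval_prod, ← Finset.prod_pow_eq_pow_sum, ← Finset.prod_mul_distrib]
  refine Finset.prod_congr rfl fun j _ => ?_
  simp only [eval_sub, eval_one, eval_pow, eval_X, inv_pow]
  field_simp
  ring

theorem hilbNum_eval_zero {k m : ℕ} (hm : 0 < m) (c : Fin k → ℕ) : (hilbNum m c).eval 0 ≠ 0 := by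
  simp only [hilbNum, eval_finsetSum, eval_pow, eval_X, zero_pow_eq]
  rw [Finset.sum_boole, Nat.cast_ne_zero, Finset.card_ne_zero]
  exact ⟨⟨fun _ => ⟨0, hm⟩, by simp⟩, by simp [resWeight, hm]⟩

/-! ### Transfer to an arbitrary representation -/

theorem eval_reverse_eq (p : ℂ[X]) (z : ℂ) (hz : z ≠ 0) :
    p.reverse.eval z = p.eval z⁻¹ * z ^ p.natDegree := by
  have := eval₂_reverse_mul_pow (RingHom.id ℂ) (Units.mk0 z⁻¹ (inv_ne_zero hz)) p
  have h : (↑(Units.mk0 z⁻¹ (inv_ne_zero hz))⁻¹ : ℂ) = z := by simp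
  rw [invOf_units, h] at this
  simp only [Units.val_mk0, eval₂_id] at this
  rw [← this, mul_assoc, ← mul_pow, inv_mul_cancel₀ hz, one_pow, mul_one]

theorem natTrailingDegree_of_eval {f : ℂ[X]} (h : f.eval 0 ≠ 0) : f.natTrailingDegree = 0 := by
  rw [natTrailingDegree_eq_zero]
  right
  rwa [coeff_zero_eq_eval_zero]

/-- A rational function `p / q` equal to `N / D` satisfies the functional equation of `N / D`,
here cleared of denominators by reversal so that it also covers the zeros of `D`. -/
theorem reverse_identity {p q N D : ℂ[X]} (hD : D ≠ 0) (hpD : p * D = N * q) (k A B : ℕ)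
    (hN : ∀ z : ℂ, z ≠ 0 → z ^ A * N.eval z⁻¹ = z ^ B * N.eval z)
    (hDi : ∀ z : ℂ, z ≠ 0 → z ^ A * D.eval z⁻¹ = (-1) ^ k * D.eval z) :
    X ^ q.natDegree * p.reverse * q
      = C ((-1) ^ k) * X ^ (B + p.natDegree) * p * q.reverse := by
  -- The factor `D` allows cancellation where `D` vanishes; the factor `X` disposes of `z = 0`,
  -- where reversal cannot be evaluated through `z⁻¹`.
  apply mul_right_cancel₀ (mul_ne_zero hD X_ne_zero)
  refine Polynomial.funext fun z => ?_
  by_cases hz : z = 0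
  · simp [hz]
  have e1 := congrArg (eval z) hpD
  have e2 := congrArg (eval z⁻¹) hpD
  have e3 := hN z hz
  have e4 := hDi z hz
  simp only [eval_mul, eval_pow, eval_X, eval_C, eval_reverse_eq _ z hz] at *
  have hs : ((-1 : ℂ) ^ k) * (-1) ^ k = 1 := by rw [← mul_pow]; simp
  have e5 : p.eval z⁻¹ * q.eval z * D.eval z
      = (-1) ^ k * z ^ B * p.eval z * q.eval z⁻¹ * D.eval z := by
    linear_combination (-(p.eval z⁻¹ * q.eval z * D.eval z)) * hs
      - (-1) ^ k * p.eval z⁻¹ * q.eval z * e4 + (-1) ^ k * z ^ A * q.eval z * e2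
      + (-1) ^ k * q.eval z⁻¹ * q.eval z * e3 - (-1) ^ k * z ^ B * q.eval z⁻¹ * e1
  linear_combination z ^ q.natDegree * z ^ p.natDegree * z * e5

/-- Corollary 7.8: let `a = (a₁, b₁, …, b_{n-1})` be an effective weight vector with a
single negative weight `a₁ < 0` (so `k = 1`) and positive weights `b`, and represent the
Hilbert series by the rational function `p/q` on `(0,1)`. If `a₁ ∣ ∑ⱼ bⱼ`, then
`Hilb_a(1/t) = (-1)^{n-1} t^{n - (∑ aⱼ)/a₁} Hilb_a(t)` as rational functions;
consequently (by Stanley's criterion) the invariant ring is Gorenstein with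
`a`-invariant `deg p - deg q = (∑ aⱼ)/a₁ - n`. -/
theorem gorenstein_k_one
    (a₁ : ℤ) (b : List ℤ)
    (ha : a₁ < 0) (hb : ∀ v ∈ b, 0 < v) (hbne : b ≠ [])
    (heff : Int.gcd a₁ (b.foldr (fun v g => Int.gcd v g : ℤ → ℤ → ℤ) 0) = 1)
    (hdvd : a₁ ∣ b.sum)
    (p q : Polynomial ℂ)
    (hpq : ∀ t : ℝ, 0 < t → t < 1 →
      Polynomial.eval (t : ℂ) q ≠ 0 ∧
        HilbL (a₁ :: b) t = Polynomial.eval (t : ℂ) p / Polynomial.eval (t : ℂ) q) :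
    (∀ z : ℂ, z ≠ 0 → Polynomial.eval z q ≠ 0 → Polynomial.eval z⁻¹ q ≠ 0 →
      Polynomial.eval z⁻¹ p / Polynomial.eval z⁻¹ q =
        (-1 : ℂ) ^ ((a₁ :: b).length - 1) *
          z ^ (((a₁ :: b).length : ℤ) - (a₁ + b.sum) / a₁) *
          (Polynomial.eval z p / Polynomial.eval z q)) ∧
    (p.natDegree : ℤ) - (q.natDegree : ℤ) = (a₁ + b.sum) / a₁ - ((a₁ :: b).length : ℤ) := by
  obtain ⟨m, rfl⟩ : ∃ m : ℕ, a₁ = -(m : ℤ) := ⟨a₁.natAbs, by omega⟩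
  have hm : 0 < m := by omega
  set c : Fin b.length → ℕ := fun j => (b.get j).natAbs with hcdef
  have hc : ∀ j, b.get j = c j := fun j => by
    have := hb _ (b.get_mem j)
    simp only [hcdef]
    omega
  have hsum : b.sum = ((∑ j, c j : ℕ) : ℤ) := by
    push_cast
    rw [← Finset.sum_congr rfl fun j _ => hc j, ← List.sum_ofFn, List.ofFn_get]
  obtain ⟨e, he⟩ : m ∣ ∑ j, c j := by
    rw [hsum] at hdvd
    exact Int.natCast_dvd_natCast.1 (Int.neg_dvd.1 hdvd)
  have hquot : (-(m : ℤ) + b.sum) / -(m : ℤ) = 1 - e := by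
    rw [hsum, he]
    push_cast
    rw [show -(m : ℤ) + m * e = -(m : ℤ) * (1 - e) by ring]
    exact Int.mul_ediv_cancel_left _ ha.ne
  have hD0 : (hilbDen m c).eval 0 ≠ 0 := eval_hilbDen_ne_zero hm c 0 (by simp)
  have hN0 := hilbNum_eval_zero hm c
  have hD : hilbDen m c ≠ 0 := fun h => hD0 (by simp [h])
  have hN : hilbNum m c ≠ 0 := fun h => hN0 (by simp [h])
  have hpD : p * hilbDen m c = hilbNum m c * q := by
    refine Polynomial.eq_of_infinite_eval_eq _ _ (Set.Infinite.mono ?_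
      ((Set.Ioo_infinite (zero_lt_one (α := ℝ))).image Complex.ofReal_injective.injOn))
    rintro _ ⟨t, ⟨h0, h1⟩, rfl⟩
    obtain ⟨hq, hH⟩ := hpq t h0 h1
    rw [HilbL_eq hm b c hc t h0 h1, div_eq_div_iff (eval_hilbDen_ne_zero hm c _
      (by simpa [abs_of_pos h0] using h1)) hq] at hH
    simpa [eval_mul] using hH.symm
  have hq : q ≠ 0 := by
    rintro rfl
    exact (hpq (1 / 2) (by norm_num) (by norm_num)).1 (by simp)
  have hp : p ≠ 0 := by
    rintro rfl
    exact mul_ne_zero hN hq (by rw [← hpD, zero_mul])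
  have hrev := reverse_identity hD hpD b.length (∑ j, (m + c j)) (b.length + e)
    (hilbNum_inv hm c e he) (hilbDen_inv c)
  refine ⟨fun z hz hqz hqz' => ?_, ?_⟩
  · have h := congrArg (eval z) hrev
    simp only [eval_mul, eval_pow, eval_X, eval_C, eval_reverse_eq _ z hz] at h
    have hexp : (((-(m : ℤ) :: b).length : ℤ) - (-(m : ℤ) + b.sum) / -(m : ℤ))
        = ((b.length + e : ℕ) : ℤ) := by
      rw [hquot]
      push_cast [List.length_cons]
      ring
    rw [hexp, zpow_natCast, List.length_cons, Nat.add_sub_cancel, ← mul_div_assoc,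
      div_eq_div_iff hqz' hqz]
    have hne : z ^ q.natDegree * z ^ p.natDegree ≠ 0 := by positivity
    apply mul_left_cancel₀ hne
    linear_combination h
  · have hs : C ((-1 : ℂ) ^ b.length) ≠ 0 := by simp
    have hpr : p.reverse ≠ 0 := by simpa using hp
    have hqr : q.reverse ≠ 0 := by simpa using hq
    have hX : ∀ n : ℕ, (X ^ n : ℂ[X]) ≠ 0 := fun n => pow_ne_zero _ X_ne_zero
    have h := congrArg natDegree hrev
    rw [natDegree_mul (mul_ne_zero (hX _) hpr) hq, natDegree_mul (hX _) hpr,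
      natDegree_mul (mul_ne_zero (mul_ne_zero hs (hX _)) hp) hqr,
      natDegree_mul (mul_ne_zero hs (hX _)) hp, natDegree_mul hs (hX _), natDegree_C,
      natDegree_X_pow, natDegree_X_pow, reverse_natDegree, reverse_natDegree] at h
    have ht := congrArg natTrailingDegree hpD
    rw [natTrailingDegree_mul hp hD, natTrailingDegree_mul hN hq,
      natTrailingDegree_of_eval hD0, natTrailingDegree_of_eval hN0] at ht
    have := natTrailingDegree_le_natDegree p
    have := natTrailingDegree_le_natDegree q
    rw [hquot, List.length_cons]
    push_cast
    omega
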